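/- There exists a bounded sequence w = (w_n)_{n≥1} of nonzero scalars such that the weighted backward shift B_w on c₀ is frequently hypercyclic but not chaotic. -/

import Mathlib

open Filter Topology
open scoped Classical ZeroAtInfty

/-- Upper density of a set of natural numbers. -/
noncomputable def upperDensity (A : Set ℕ) : ℝ :=
  Filter.limsup
    (fun N : ℕ => (((Finset.range (N + 1)).filter (fun n => n ∈ A)).card : ℝ) / ((N : ℝ) + 1))
    Filter.atTop

/-- Lower density of a set of natural numbers. -/
noncomputable def lowerDensity (A : Set ℕ) : ℝ :=
  Filter.liminf
    (fun N : ℕ => (((Finset.range (N + 1)).filter (fun n => n ∈ A)).card : ℝ) / ((N : ℝ) + 1))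
    Filter.atTop

/-- Upper Banach density of a set of natural numbers. -/
noncomputable def upperBanachDensity (A : Set ℕ) : ℝ :=
  ⨅ N : ℕ, ⨆ m : ℕ, (((Finset.Icc m (m + N)).filter (fun n => n ∈ A)).card : ℝ) / ((N : ℝ) + 1)

/-!
Choose weights whose products are `W_n = b ^ D_n`, where `‖b‖ > 1` and `D_n` is the distance from
`n` to the set of base-four repunits `R_k = 1 + 4 + ⋯ + 4 ^ (k - 1)`. A periodic point `x` of `B_w`
with `x_0 ≠ 0` forces `W_n → ∞`, which fails because `W_n = 1` at every repunit.

If `k ≥ s` then `R_k ≡ R_s` modulo `4 ^ s`, and `R_s` is about `4 ^ s / 3`. Hence the positive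
multiples of `4 ^ s` are far from the repunits, and the repunits and their opposites occupy so few
residue classes modulo `4 ^ s` that these classes can be removed from the sets of multiples of the
much smaller powers of `4` at little cost in density. For a rapidly increasing sequence of exponents
`s` this leaves sets of positive lower density such that the difference of any two of their points
is far from the repunits. Copies of the members of a dense sequence of finitely supported vectors,
divided by the `W_n`, can therefore be put at these sets without disturbing one another, and their
superposition is a frequently hypercyclic vector.
-/

section Density

/-- The number of elements of `A` in `[0, N]`, the numerator in the definition of the densities. -/
noncomputable def countUpTo (A : Set ℕ) (N : ℕ) : ℕ :=
  ((Finset.range (N + 1)).filter (fun n => n ∈ A)).card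

lemma lowerDensity_eq_liminf_countUpTo (A : Set ℕ) :
    lowerDensity A = liminf (fun N : ℕ => (countUpTo A N : ℝ) / ((N : ℝ) + 1)) atTop :=
  rfl

lemma countUpTo_mono {A B : Set ℕ} (h : A ⊆ B) (N : ℕ) : countUpTo A N ≤ countUpTo B N :=
  Finset.card_le_card (Finset.monotone_filter_right _ fun _ _ hn => h hn)

lemma countUpTo_le (A : Set ℕ) (N : ℕ) : countUpTo A N ≤ N + 1 :=
  (Finset.card_filter_le _ _).trans (Finset.card_range _).le

lemma countUpTo_union_le (A B : Set ℕ) (N : ℕ) :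
    countUpTo (A ∪ B) N ≤ countUpTo A N + countUpTo B N := by
  simp only [countUpTo, Set.mem_union, Finset.filter_or]
  exact Finset.card_union_le _ _

lemma countUpTo_biUnion_le {ι : Type*} (F : Finset ι) (R : ι → Set ℕ) (N : ℕ) :
    countUpTo (⋃ i ∈ F, R i) N ≤ ∑ i ∈ F, countUpTo (R i) N := by
  refine (Finset.card_le_card fun n hn => ?_).trans Finset.card_biUnion_le
  simpa [← exists_and_left, and_left_comm] using hn

lemma countUpTo_iUnion_le_tsum {ι : Type*} {R : ι → Set ℕ} {δ : ι → ℝ} {N : ℕ}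
    (hδ : Summable δ) (h : ∀ i, (countUpTo (R i) N : ℝ) ≤ δ i) :
    (countUpTo (⋃ i, R i) N : ℝ) ≤ ∑' i, δ i := by
  set S := (Finset.range (N + 1)).filter (fun n => n ∈ ⋃ i, R i)
  have hcover : ∀ n ∈ S, ∃ i, n ∈ R i := fun n hn => Set.mem_iUnion.1 (Finset.mem_filter.1 hn).2
  choose g hg using hcover
  let F : Finset ι := S.attach.image fun n : {n // n ∈ S} => g n.1 n.2
  have hfin : countUpTo (⋃ i, R i) N ≤ countUpTo (⋃ i ∈ F, R i) N := by
    refine Finset.card_le_card fun n hn => Finset.mem_filter.2 ⟨(Finset.mem_filter.1 hn).1, ?_⟩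
    exact Set.mem_biUnion (Finset.mem_image_of_mem _ (Finset.mem_attach S ⟨n, hn⟩)) (hg n hn)
  calc (countUpTo (⋃ i, R i) N : ℝ) ≤ ∑ i ∈ F, (countUpTo (R i) N : ℝ) := by
        exact_mod_cast hfin.trans (countUpTo_biUnion_le F R N)
    _ ≤ ∑ i ∈ F, δ i := Finset.sum_le_sum fun i _ => h i
    _ ≤ ∑' i, δ i := hδ.sum_le_tsum F fun i _ => (Nat.cast_nonneg _).trans (h i)

lemma isBoundedUnder_ge_countUpTo_div (A : Set ℕ) :
    IsBoundedUnder (· ≥ ·) atTop fun N : ℕ => (countUpTo A N : ℝ) / ((N : ℝ) + 1) :=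
  isBoundedUnder_of ⟨0, fun _ => by positivity⟩

lemma isCoboundedUnder_ge_countUpTo_div (A : Set ℕ) :
    IsCoboundedUnder (· ≥ ·) atTop fun N : ℕ => (countUpTo A N : ℝ) / ((N : ℝ) + 1) :=
  (isBoundedUnder_of ⟨1, fun N => div_le_one_of_le₀ (by exact_mod_cast countUpTo_le A N)
    (by positivity)⟩).isCoboundedUnder_ge

lemma lowerDensity_mono {A B : Set ℕ} (h : A ⊆ B) : lowerDensity A ≤ lowerDensity B := by
  refine liminf_le_liminf (Eventually.of_forall fun N => ?_) (isBoundedUnder_ge_countUpTo_div A)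
    (isCoboundedUnder_ge_countUpTo_div B)
  have := countUpTo_mono h N
  gcongr

lemma lowerDensity_sub_tsum_le_lowerDensity_diff {ι : Type*} (A : Set ℕ) {R : ι → Set ℕ}
    {δ : ι → ℝ} (hδ : Summable δ) (h : ∀ i N, (countUpTo (R i) N : ℝ) ≤ δ i * ((N : ℝ) + 1)) :
    lowerDensity A - ∑' i, δ i ≤ lowerDensity (A \ ⋃ i, R i) := by
  have hcount (N : ℕ) : (countUpTo A N : ℝ) / ((N : ℝ) + 1) - ∑' i, δ i
      ≤ (countUpTo (A \ ⋃ i, R i) N : ℝ) / ((N : ℝ) + 1) := by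
    have hsplit : countUpTo A N ≤ countUpTo (A \ ⋃ i, R i) N + countUpTo (⋃ i, R i) N :=
      (countUpTo_mono (by simp) N).trans (countUpTo_union_le _ _ N)
    have hunion := countUpTo_iUnion_le_tsum (hδ.mul_right _) (h · N)
    rw [tsum_mul_right] at hunion
    rw [sub_le_iff_le_add, div_add' _ _ _ (by positivity)]
    gcongr
    exact (Nat.cast_le.2 hsplit).trans (by push_cast; linarith)
  rw [lowerDensity_eq_liminf_countUpTo, ← liminf_sub_const _ _ _
    (isCoboundedUnder_ge_countUpTo_div A) (isBoundedUnder_ge_countUpTo_div A)]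
  exact liminf_le_liminf (Eventually.of_forall hcount)
    (isBoundedUnder_of ⟨-∑' i, δ i, fun N => neg_le_sub_iff_le_add.2 <|
      le_add_of_nonneg_left (by positivity)⟩)
    (isCoboundedUnder_ge_countUpTo_div _)

lemma countUpTo_pos_multiples (d N : ℕ) : countUpTo {n | 0 < n ∧ d ∣ n} N = N / d := by
  rw [← Nat.Ioc_filter_dvd_card_eq_div, countUpTo]
  congr 1
  ext n
  simp only [Finset.mem_filter, Finset.mem_range, Finset.mem_Ioc, Set.mem_ofPred_eq]
  grind

lemma lowerDensity_pos_multiples (d : ℕ) : lowerDensity {n | 0 < n ∧ d ∣ n} = (d : ℝ)⁻¹ := by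
  rw [lowerDensity_eq_liminf_countUpTo]
  simp only [countUpTo_pos_multiples]
  have hfloor := tendsto_nat_floor_mul_div_atTop (R := ℝ) (a := (d : ℝ)⁻¹) (by positivity)
  have hlim := (hfloor.comp tendsto_natCast_atTop_atTop).mul (tendsto_natCast_div_add_atTop (1 : ℝ))
  rw [mul_one] at hlim
  refine (hlim.congr' ?_).liminf_eq
  filter_upwards [eventually_gt_atTop 0] with N hN
  have hN' : (N : ℝ) ≠ 0 := by positivity
  rw [Function.comp_apply, ← div_eq_inv_mul, Nat.floor_div_natCast, Nat.floor_natCast]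
  field_simp

lemma countUpTo_modEq_le (r : ℕ) (c : ℤ) (N : ℕ) :
    countUpTo {n | (n : ℤ) ≡ c [ZMOD r]} N ≤ N / r + 1 := by
  rw [← Finset.card_range (N / r + 1)]
  refine Finset.card_le_card_of_injOn (· / r) (fun n hn => ?_) fun n hn m hm hdiv => ?_
  · simp only [Finset.coe_filter, Finset.mem_range, Set.mem_ofPred_eq] at hn
    simp only [Finset.coe_range, Set.mem_Iio, Order.lt_add_one_iff]
    exact Nat.div_le_div_right (Nat.lt_succ_iff.1 hn.1)
  · simp only [Finset.coe_filter, Finset.mem_range, Set.mem_ofPred_eq] at hn hm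
    have hmod : n % r = m % r := Int.natCast_modEq_iff.1 (hn.2.trans hm.2.symm)
    exact Nat.ext_div_mod hdiv hmod

lemma countUpTo_residues_le (r : ℕ) (T : Finset ℤ) (N : ℕ) :
    countUpTo {n | ∃ c ∈ T, (n : ℤ) ≡ c [ZMOD r]} N ≤ T.card * (N / r + 1) := by
  have hunion : {n : ℕ | ∃ c ∈ T, (n : ℤ) ≡ c [ZMOD r]} =
      ⋃ c ∈ T, {n : ℕ | (n : ℤ) ≡ c [ZMOD r]} := by
    ext
    simp
  rw [hunion, ← smul_eq_mul]
  exact (countUpTo_biUnion_le T _ N).trans <|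
    Finset.sum_le_card_nsmul _ _ _ fun c _ => countUpTo_modEq_le r c N

end Density

section NullSequences

variable {E : Type*} [NormedAddCommGroup E]

/-- The space `C₀(ℕ, E)` is the space of null sequences; this is the sequence `f` as a member. -/
def c0OfTendsto (f : ℕ → E) (hf : Tendsto f atTop (𝓝 0)) : C₀(ℕ, E) where
  toFun := f
  zero_at_infty' := by rwa [cocompact_eq_atTop]

@[simp]
lemma c0OfTendsto_apply (f : ℕ → E) (hf : Tendsto f atTop (𝓝 0)) (n : ℕ) :
    c0OfTendsto f hf n = f n :=
  rfl

lemma tendsto_c0_atTop (x : C₀(ℕ, E)) : Tendsto x atTop (𝓝 0) := by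
  simpa only [cocompact_eq_atTop] using zero_at_infty x

lemma norm_c0_apply_le (x : C₀(ℕ, E)) (n : ℕ) : ‖x n‖ ≤ ‖x‖ := by
  rw [← ZeroAtInftyContinuousMap.norm_toBCF_eq_norm]
  exact x.toBCF.norm_coe_le_norm n

lemma norm_c0_le {x : C₀(ℕ, E)} {C : ℝ} (h : ∀ n, ‖x n‖ ≤ C) : ‖x‖ ≤ C := by
  rw [← ZeroAtInftyContinuousMap.norm_toBCF_eq_norm]
  exact (BoundedContinuousFunction.norm_le ((norm_nonneg _).trans (h 0))).2 h

lemma continuous_c0_apply (n : ℕ) : Continuous fun x : C₀(ℕ, E) => x n :=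
  (BoundedContinuousFunction.lipschitz_eval_const n).continuous.comp
    ZeroAtInftyContinuousMap.isometry_toBCF.continuous

/-- The sequence which agrees with `z` before `d` and vanishes from `d` on. -/
def c0Truncate (d : ℕ) (z : ℕ → E) : C₀(ℕ, E) :=
  c0OfTendsto (fun t => if t < d then z t else 0) <|
    tendsto_const_nhds.congr' <| (eventually_ge_atTop d).mono fun _ ht => (if_neg ht.not_gt).symm

lemma c0Truncate_apply_of_lt {d t : ℕ} (z : ℕ → E) (h : t < d) : c0Truncate d z t = z t :=
  if_pos h

lemma c0Truncate_apply_of_le {d t : ℕ} (z : ℕ → E) (h : d ≤ t) : c0Truncate d z t = 0 :=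
  if_neg h.not_gt

lemma continuous_c0Truncate (d : ℕ) : Continuous (c0Truncate d : (ℕ → E) → C₀(ℕ, E)) := by
  refine continuous_iff_continuousAt.2 fun z => Metric.tendsto_nhds.2 fun ε hε => ?_
  have hclose : ∀ᶠ z' in 𝓝 z, ∀ t ∈ Finset.range d, dist (z' t) (z t) < ε / 2 :=
    (eventually_all_finset _).2 fun t _ =>
      Metric.tendsto_nhds.1 ((continuous_apply t).tendsto z) _ (half_pos hε)
  filter_upwards [hclose] with z' hz'
  rw [dist_eq_norm]
  refine (norm_c0_le fun t => ?_).trans_lt (half_lt_self hε)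
  rw [ZeroAtInftyContinuousMap.sub_apply]
  rcases lt_or_ge t d with ht | ht
  · rw [c0Truncate_apply_of_lt _ ht, c0Truncate_apply_of_lt _ ht, ← dist_eq_norm]
    exact (hz' t (Finset.mem_range.2 ht)).le
  · rw [c0Truncate_apply_of_le _ ht, c0Truncate_apply_of_le _ ht, sub_zero, norm_zero]
    exact (half_pos hε).le

lemma tendsto_c0Truncate (x : C₀(ℕ, E)) :
    Tendsto (fun d => c0Truncate d x) atTop (𝓝 x) := by
  refine Metric.tendsto_atTop.2 fun ε hε => ?_
  obtain ⟨T, hT⟩ := Metric.tendsto_atTop.1 (tendsto_c0_atTop x) (ε / 2) (half_pos hε)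
  refine ⟨T, fun d hd => ?_⟩
  rw [dist_eq_norm]
  refine (norm_c0_le fun t => ?_).trans_lt (half_lt_self hε)
  rw [ZeroAtInftyContinuousMap.sub_apply]
  rcases lt_or_ge t d with ht | ht
  · rw [c0Truncate_apply_of_lt _ ht, sub_self, norm_zero]
    exact (half_pos hε).le
  · rw [c0Truncate_apply_of_le _ ht, zero_sub, norm_neg, ← dist_zero_right]
    exact (hT t (hd.trans ht)).le

lemma exists_denseRange_c0Truncate [TopologicalSpace.SeparableSpace E] :
    ∃ (d : ℕ → ℕ) (z : ℕ → ℕ → E), DenseRange fun p => c0Truncate (d p) (z p) := by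
  let z := TopologicalSpace.denseSeq (ℕ → E)
  refine ⟨fun p => p.unpair.1, fun p => z p.unpair.2, fun x => ?_⟩
  have hmem (d : ℕ) :
      c0Truncate d x ∈ closure (Set.range fun p : ℕ => c0Truncate p.unpair.1 (z p.unpair.2)) := by
    refine closure_mono ?_ ((continuous_c0Truncate d).range_subset_closure_image_dense
      (TopologicalSpace.denseRange_denseSeq (ℕ → E)) ⟨x, rfl⟩)
    rintro _ ⟨_, ⟨i, rfl⟩, rfl⟩
    exact ⟨Nat.pair d i, by simp [z]⟩
  exact isClosed_closure.mem_of_tendsto (tendsto_c0Truncate x) (Eventually.of_forall hmem)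

lemma exists_frequently_c0Truncate_mem [TopologicalSpace.SeparableSpace E] :
    ∃ (d : ℕ → ℕ) (z : ℕ → ℕ → E), ∀ U : Set C₀(ℕ, E), IsOpen U → U.Nonempty →
      ∃ᶠ p in atTop, c0Truncate (d p) (z p) ∈ U := by
  obtain ⟨d, z, hdense⟩ := exists_denseRange_c0Truncate (E := E)
  refine ⟨fun p => d p.unpair.2, fun p => z p.unpair.2, fun U hU hne => ?_⟩
  obtain ⟨i, hi⟩ := hdense.exists_mem_open hU hne
  exact frequently_atTop.2 fun P => ⟨Nat.pair P i, Nat.left_le_pair P i, by simpa using hi⟩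

end NullSequences

section WeightedShift

variable {𝕜 : Type*} [NormedField 𝕜]

/-- The weighted backward shift `B_w` on `c₀`. The weights are indexed from `1`, so that `w 0`
does not enter. -/
noncomputable def weightedShift (w : ℕ → 𝕜) (hw : ∃ C : ℝ, ∀ n, ‖w n‖ ≤ C) :
    C₀(ℕ, 𝕜) →L[𝕜] C₀(ℕ, 𝕜) :=
  LinearMap.mkContinuousOfExistsBound
    { toFun x := c0OfTendsto (fun n => w (n + 1) * x (n + 1)) <|
        isBoundedUnder_le_mul_tendsto_zero (isBoundedUnder_of (hw.imp fun _ h n => h (n + 1)))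
          ((tendsto_c0_atTop x).comp (tendsto_add_atTop_nat 1))
      map_add' x y := by ext n; simp [mul_add]
      map_smul' c x := by ext n; simp [mul_left_comm] } <| by
    obtain ⟨C, hC⟩ := hw
    refine ⟨C, fun x => norm_c0_le fun n => ?_⟩
    calc ‖w (n + 1) * x (n + 1)‖ = ‖w (n + 1)‖ * ‖x (n + 1)‖ := norm_mul _ _
      _ ≤ C * ‖x‖ := mul_le_mul (hC _) (norm_c0_apply_le x _) (norm_nonneg _)
        ((norm_nonneg _).trans (hC 0))

lemma weightedShift_apply (w : ℕ → 𝕜) (hw : ∃ C : ℝ, ∀ n, ‖w n‖ ≤ C) (x : C₀(ℕ, 𝕜)) (n : ℕ) :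
    weightedShift w hw x n = w (n + 1) * x (n + 1) :=
  rfl

/-- The product `w_1 ⋯ w_n`; iterates of `B_w` multiply coordinates by quotients of these. -/
def weightProd (w : ℕ → 𝕜) (n : ℕ) : 𝕜 :=
  ∏ i ∈ Finset.range n, w (i + 1)

@[simp]
lemma weightProd_zero (w : ℕ → 𝕜) : weightProd w 0 = 1 :=
  Finset.prod_range_zero _

lemma weightProd_succ (w : ℕ → 𝕜) (n : ℕ) :
    weightProd w (n + 1) = weightProd w n * w (n + 1) :=
  Finset.prod_range_succ _ _

lemma weightProd_ne_zero {w : ℕ → 𝕜} (h : ∀ n, w n ≠ 0) (n : ℕ) : weightProd w n ≠ 0 :=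
  Finset.prod_ne_zero_iff.2 fun _ _ => h _

lemma weightProd_div {f : ℕ → 𝕜} (h : ∀ n, f n ≠ 0) (n : ℕ) :
    weightProd (fun i => f i / f (i - 1)) n = f n / f 0 := by
  induction n with
  | zero => rw [weightProd_zero, div_self (h 0)]
  | succ n ih => rw [weightProd_succ, ih, Nat.add_sub_cancel, mul_comm, div_mul_div_cancel₀ (h n)]

lemma exists_norm_le_and_one_le {w : ℕ → 𝕜} (hw : ∃ C : ℝ, ∀ n, ‖w n‖ ≤ C) :
    ∃ C : ℝ, (∀ n, ‖w n‖ ≤ C) ∧ 1 ≤ C :=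
  hw.elim fun C hC => ⟨max 1 C, fun n => (hC n).trans (le_max_right _ _), le_max_left _ _⟩

lemma norm_weightProd_add_le {w : ℕ → 𝕜} {C : ℝ} (h : ∀ n, ‖w n‖ ≤ C) (m t : ℕ) :
    ‖weightProd w (m + t)‖ ≤ ‖weightProd w m‖ * C ^ t := by
  induction t with
  | zero => simp
  | succ t ih =>
    rw [← add_assoc, weightProd_succ, norm_mul, pow_succ, ← mul_assoc]
    have hC : 0 ≤ C := (norm_nonneg _).trans (h 0)
    gcongr
    exact h _

lemma norm_weightProd_le {w : ℕ → 𝕜} {C : ℝ} (hC : ∀ n, ‖w n‖ ≤ C) (hC1 : 1 ≤ C) {t d : ℕ}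
    (htd : t ≤ d) : ‖weightProd w t‖ ≤ C ^ d :=
  calc ‖weightProd w t‖ ≤ C ^ t := by simpa using norm_weightProd_add_le hC 0 t
    _ ≤ C ^ d := pow_le_pow_right₀ hC1 htd

lemma weightProd_mul_iterate_weightedShift (w : ℕ → 𝕜) (hw : ∃ C : ℝ, ∀ n, ‖w n‖ ≤ C)
    (n : ℕ) (x : C₀(ℕ, 𝕜)) (j : ℕ) :
    weightProd w j * (⇑(weightedShift w hw))^[n] x j = weightProd w (n + j) * x (n + j) := by
  induction n generalizing x with
  | zero => simp
  | succ n ih =>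
    rw [Function.iterate_succ_apply, ih, weightedShift_apply, ← mul_assoc, ← weightProd_succ,
      Nat.add_right_comm]

lemma norm_apply_zero_le_of_isPeriodicPt {w : ℕ → 𝕜} {C : ℝ} (hC : ∀ n, ‖w n‖ ≤ C) (hC1 : 1 ≤ C)
    {n : ℕ} (hn : 0 < n) {x : C₀(ℕ, 𝕜)}
    (hx : Function.IsPeriodicPt (weightedShift w ⟨C, hC⟩) n x) (m : ℕ) :
    ‖x 0‖ ≤ C ^ n * ‖weightProd w m‖ * ‖x (n * (m / n + 1))‖ := by
  set k := n * (m / n + 1) with hk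
  obtain ⟨t, ht⟩ : ∃ t, k = m + t := Nat.exists_eq_add_of_le (Nat.lt_mul_div_succ m hn).le
  have htn : t ≤ n := by
    have := Nat.mul_div_le m n
    rw [mul_add_one] at hk
    omega
  have hx0 : x 0 = weightProd w k * x k := by
    have := weightProd_mul_iterate_weightedShift w ⟨C, hC⟩ k x 0
    rwa [(hx.mul_const (m / n + 1)).eq, weightProd_zero, one_mul, add_zero] at this
  calc ‖x 0‖ = ‖weightProd w (m + t)‖ * ‖x k‖ := by rw [hx0, norm_mul, ht]
    _ ≤ ‖weightProd w m‖ * C ^ t * ‖x k‖ := by gcongr; exact norm_weightProd_add_le hC m t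
    _ ≤ ‖weightProd w m‖ * C ^ n * ‖x k‖ := by gcongr
    _ = C ^ n * ‖weightProd w m‖ * ‖x k‖ := by rw [mul_comm (C ^ n)]

lemma tendsto_norm_weightProd_of_mem_periodicPts {w : ℕ → 𝕜} (hw : ∃ C : ℝ, ∀ n, ‖w n‖ ≤ C)
    {x : C₀(ℕ, 𝕜)} (hx : x ∈ Function.periodicPts (weightedShift w hw)) (hx0 : x 0 ≠ 0) :
    Tendsto (fun m => ‖weightProd w m‖) atTop atTop := by
  obtain ⟨n, hn, hper⟩ := hx
  obtain ⟨C, hC, hC1⟩ := exists_norm_le_and_one_le hw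
  have hbound := norm_apply_zero_le_of_isPeriodicPt hC hC1 hn hper
  have hindex : Tendsto (fun m => n * (m / n + 1)) atTop atTop :=
    tendsto_atTop_mono (fun m => (Nat.lt_mul_div_succ m hn).le) tendsto_id
  have hzero : Tendsto (fun m => C ^ n * ‖x (n * (m / n + 1))‖) atTop (𝓝 0) := by
    simpa using ((tendsto_c0_atTop x).comp hindex).norm.const_mul (C ^ n)
  refine tendsto_atTop.2 fun b => ?_
  filter_upwards [(hzero.mul_const b).eventually_lt_const (by simpa : 0 * b < ‖x 0‖)] with m hm
  refine (lt_of_mul_lt_mul_left (hm.trans_le (?_ : ‖x 0‖ ≤ _ * ‖weightProd w m‖)) ?_).le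
  · exact (hbound m).trans_eq (mul_right_comm _ _ _)
  · exact mul_nonneg (pow_nonneg (zero_le_one.trans hC1) n) (norm_nonneg _)

lemma tendsto_norm_weightProd_of_dense_periodicPts {w : ℕ → 𝕜}
    (hw : ∃ C : ℝ, ∀ n, ‖w n‖ ≤ C)
    (hdense : Dense (Function.periodicPts (weightedShift w hw))) :
    Tendsto (fun n => ‖weightProd w n‖) atTop atTop := by
  have hopen : IsOpen {x : C₀(ℕ, 𝕜) | x 0 ≠ 0} :=
    isOpen_ne.preimage (continuous_c0_apply 0)
  obtain ⟨x, hx0, hx⟩ := hdense.inter_open_nonempty _ hopen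
    ⟨c0Truncate 1 fun _ => 1, by simp [c0Truncate_apply_of_lt]⟩
  exact tendsto_norm_weightProd_of_mem_periodicPts hw hx hx0

end WeightedShift

section ReturnFamily

open scoped Pointwise

/-- The combinatorial hypothesis of the frequent hypercyclicity criterion. The `p`-th target vector
is supported in `[0, d p]` and is copied at the blocks `[n, n + d p]`, `n ∈ E p`; the size `V i` of
the weight product at `i` measures how strongly a copy at `i` is damped, and `M r` is the size
needed for an error of level `r`. -/
structure IsReturnFamily {α : Type*} [Preorder α] (V M : ℕ → α) (d : ℕ → ℕ) (E : ℕ → Set ℕ) :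
    Prop where
  lowerDensity_pos (p : ℕ) : 0 < lowerDensity (E p)
  le_of_mem {p i : ℕ} : i ∈ E p + Set.Iic (d p) → M p ≤ V i
  tendsto (p : ℕ) : Tendsto V (atTop ⊓ 𝓟 (E p + Set.Iic (d p))) atTop
  le_sub {p q n m t : ℕ} : n ∈ E p → m ∈ E q → n ≤ m → (p, n) ≠ (q, m) → t ≤ d q →
    M (max p q) ≤ V (m - n + t)

lemma IsReturnFamily.comp {α β : Type*} [Preorder α] [Preorder β] {V L : ℕ → α} {M : ℕ → β}
    {d : ℕ → ℕ} {E : ℕ → Set ℕ} (h : IsReturnFamily V L d E) {φ : α → β} (hφ : Monotone φ)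
    (hlim : Tendsto φ atTop atTop) (hM : ∀ p, M p ≤ φ (L p)) :
    IsReturnFamily (φ ∘ V) M d E where
  lowerDensity_pos := h.lowerDensity_pos
  le_of_mem hi := (hM _).trans (hφ (h.le_of_mem hi))
  tendsto p := hlim.comp (h.tendsto p)
  le_sub hn hm hnm hne ht := (hM _).trans (hφ (h.le_sub hn hm hnm hne ht))

/-- A point of one of the blocks `[n, n + d p]`, `n ∈ E p`, together with its block. -/
@[ext]
structure BlockIndex (E : ℕ → Set ℕ) (d : ℕ → ℕ) where
  /-- The index `p` of the vector copied at the block. -/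
  level : ℕ
  /-- The left endpoint `n` of the block. -/
  start : ℕ
  /-- The distance to the left endpoint. -/
  offset : ℕ
  start_mem : start ∈ E level
  offset_le : offset ≤ d level

namespace BlockIndex

variable {E : ℕ → Set ℕ} {d : ℕ → ℕ}

/-- The point of `ℕ` which a block index stands for. -/
def position (i : BlockIndex E d) : ℕ :=
  i.start + i.offset

lemma position_mem (i : BlockIndex E d) : i.position ∈ E i.level + Set.Iic (d i.level) :=
  Set.add_mem_add i.start_mem i.offset_le

end BlockIndex

namespace IsReturnFamily

variable {α : Type*} [Preorder α] {V M : ℕ → α} {d : ℕ → ℕ} {E : ℕ → Set ℕ}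

lemma lt_sub (h : IsReturnFamily V M d E) (hV : ∀ p r, p ≤ r → ∀ k ≤ d p, V k < M r)
    {p q n m : ℕ} (hn : n ∈ E p) (hm : m ∈ E q) (hnm : n ≤ m) (hne : (p, n) ≠ (q, m)) :
    d p < m - n := by
  by_contra! hle
  exact (hV p _ (le_max_left p q) _ hle).not_ge (h.le_sub hn hm hnm hne (Nat.zero_le _))

lemma position_injective (h : IsReturnFamily V M d E)
    (hV : ∀ p r, p ≤ r → ∀ k ≤ d p, V k < M r) :
    Function.Injective (BlockIndex.position : BlockIndex E d → ℕ) := by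
  suffices hstart : ∀ i j : BlockIndex E d, i.position = j.position → i.start ≤ j.start → i = j by
    intro i j hij
    exact (le_total i.start j.start).elim (hstart i j hij) fun hji => (hstart j i hij.symm hji).symm
  intro i j hij hle
  have hsum : i.start + i.offset = j.start + j.offset := hij
  have heq : (i.level, i.start) = (j.level, j.start) := by
    by_contra hne
    have := h.lt_sub hV i.start_mem j.start_mem hle hne
    have := i.offset_le
    omega
  obtain ⟨hlevel, hst⟩ := Prod.mk.inj heq
  exact BlockIndex.ext hlevel hst (by omega)

end IsReturnFamily

end ReturnFamily

section Criterion

open scoped Pointwise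

variable {𝕜 : Type*} [NormedField 𝕜] {w : ℕ → 𝕜} {C : ℝ} {d : ℕ → ℕ} {E : ℕ → Set ℕ}
  {y : ℕ → C₀(ℕ, 𝕜)}

/-- The size of `‖w_1 ⋯ w_N‖` which makes the copies at `N` of `y 0, …, y r` smaller than `2⁻ʳ`,
for weights bounded by `C`. -/
noncomputable def copyThreshold (C : ℝ) (d : ℕ → ℕ) (y : ℕ → C₀(ℕ, 𝕜)) (r : ℕ) : ℝ :=
  2 ^ r * (1 + ∑ p ∈ Finset.range (r + 1), C ^ d p * (1 + ‖y p‖))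

lemma lt_copyThreshold (hC1 : 1 ≤ C) {p r : ℕ} (hpr : p ≤ r) :
    2 ^ r * (C ^ d p * (1 + ‖y p‖)) < copyThreshold C d y r := by
  have : 0 < C := one_pos.trans_le hC1
  unfold copyThreshold
  gcongr
  exact (Finset.single_le_sum (f := fun p => C ^ d p * (1 + ‖y p‖)) (fun _ _ => by positivity)
    (Finset.mem_range.2 (Nat.lt_succ_of_le hpr))).trans_lt (lt_one_add _)

lemma copyThreshold_pos (hC1 : 1 ≤ C) (r : ℕ) : 0 < copyThreshold C d y r :=
  lt_of_le_of_lt (have := one_pos.trans_le hC1; by positivity) (lt_copyThreshold hC1 le_rfl)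

lemma norm_weightProd_lt_copyThreshold (hC : ∀ n, ‖w n‖ ≤ C) (hC1 : 1 ≤ C) {p r k : ℕ}
    (hpr : p ≤ r) (hk : k ≤ d p) : ‖weightProd w k‖ < copyThreshold C d y r :=
  have : 0 < C := one_pos.trans_le hC1
  calc ‖weightProd w k‖ ≤ C ^ d p := norm_weightProd_le hC hC1 hk
    _ ≤ C ^ d p * (1 + ‖y p‖) :=
        le_mul_of_one_le_right (by positivity) (le_add_of_nonneg_right (norm_nonneg _))
    _ ≤ 2 ^ r * (C ^ d p * (1 + ‖y p‖)) :=
        le_mul_of_one_le_left (by positivity) (one_le_pow₀ one_le_two)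
    _ < copyThreshold C d y r := lt_copyThreshold hC1 hpr

lemma norm_weightProd_div_mul_le (hC : ∀ n, ‖w n‖ ≤ C) (hC1 : 1 ≤ C) {p r t N : ℕ} (hpr : p ≤ r)
    (ht : t ≤ d p) (hN : copyThreshold C d y r ≤ ‖weightProd w N‖) :
    ‖weightProd w t / weightProd w N * y p t‖ ≤ (1 / 2) ^ r := by
  have : 0 < C := one_pos.trans_le hC1
  rw [norm_mul, norm_div, div_mul_eq_mul_div, div_le_iff₀ ((copyThreshold_pos hC1 r).trans_le hN)]
  calc ‖weightProd w t‖ * ‖y p t‖ ≤ C ^ d p * (1 + ‖y p‖) := by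
        gcongr
        · exact norm_weightProd_le hC hC1 ht
        · linarith [norm_c0_apply_le (y p) t]
    _ = (1 / 2) ^ r * (2 ^ r * (C ^ d p * (1 + ‖y p‖))) := by
        rw [← mul_assoc, ← mul_pow]
        norm_num
    _ ≤ (1 / 2) ^ r * ‖weightProd w N‖ := by
        gcongr
        exact (lt_copyThreshold hC1 hpr).le.trans hN

/-- Copies `y p` at every block `[n, n + d p]`, `n ∈ E p`, rescaled so that `B_w ^ n` moves the copy
at `n` back to `y p` exactly. -/
noncomputable def blockCopies (w : ℕ → 𝕜) (E : ℕ → Set ℕ) (d : ℕ → ℕ) (y : ℕ → C₀(ℕ, 𝕜)) :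
    ℕ → 𝕜 :=
  Function.extend (BlockIndex.position : BlockIndex E d → ℕ)
    (fun i => weightProd w i.offset / weightProd w i.position * y i.level i.offset) 0

lemma blockCopies_position (hC : ∀ n, ‖w n‖ ≤ C) (hC1 : 1 ≤ C)
    (h : IsReturnFamily (fun n => ‖weightProd w n‖) (copyThreshold C d y) d E)
    (i : BlockIndex E d) : blockCopies w E d y i.position =
      weightProd w i.offset / weightProd w i.position * y i.level i.offset :=
  (h.position_injective fun _ _ hpr _ hk =>
    norm_weightProd_lt_copyThreshold hC hC1 hpr hk).extend_apply _ _ _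

lemma blockCopies_eq_zero {N : ℕ} (hN : ¬∃ i : BlockIndex E d, i.position = N) :
    blockCopies w E d y N = 0 :=
  Function.extend_apply' _ _ _ hN

lemma tendsto_blockCopies (hC : ∀ n, ‖w n‖ ≤ C) (hC1 : 1 ≤ C)
    (h : IsReturnFamily (fun n => ‖weightProd w n‖) (copyThreshold C d y) d E) :
    Tendsto (blockCopies w E d y) atTop (𝓝 0) := by
  have hlevel (K : ℕ) : ∀ᶠ N in atTop, ‖blockCopies w E d y N‖ ≤ (1 / 2) ^ K := by
    have hlarge : ∀ᶠ N in atTop, ∀ p ∈ Finset.range K, N ∈ E p + Set.Iic (d p) →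
        copyThreshold C d y K ≤ ‖weightProd w N‖ := (eventually_all_finset _).2 fun p _ =>
      eventually_inf_principal.1 ((h.tendsto p).eventually_ge_atTop _)
    filter_upwards [hlarge] with N hN
    by_cases hpos : ∃ i : BlockIndex E d, i.position = N
    · obtain ⟨i, rfl⟩ := hpos
      rw [blockCopies_position hC hC1 h]
      rcases lt_or_ge i.level K with hi | hi
      · exact norm_weightProd_div_mul_le hC hC1 hi.le i.offset_le
          (hN _ (Finset.mem_range.2 hi) i.position_mem)
      · exact (norm_weightProd_div_mul_le hC hC1 le_rfl i.offset_le
          (h.le_of_mem i.position_mem)).trans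
            (pow_le_pow_of_le_one (by norm_num) (by norm_num) hi)
    · rw [blockCopies_eq_zero hpos, norm_zero]
      positivity
  refine Metric.tendsto_nhds.2 fun ε hε => ?_
  obtain ⟨K, hK⟩ := exists_pow_lt_of_lt_one hε (by norm_num : (1 / 2 : ℝ) < 1)
  exact (hlevel K).mono fun N hN => by simpa using hN.trans_lt (by simpa using hK)

lemma iterate_weightedShift_blockCopies (hw : ∀ n, w n ≠ 0) (hC : ∀ n, ‖w n‖ ≤ C) (hC1 : 1 ≤ C)
    (h : IsReturnFamily (fun n => ‖weightProd w n‖) (copyThreshold C d y) d E) {n j : ℕ}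
    {i : BlockIndex E d} (hi : i.position = n + j) :
    (⇑(weightedShift w ⟨C, hC⟩))^[n] (c0OfTendsto _ (tendsto_blockCopies hC hC1 h)) j =
      weightProd w i.offset / weightProd w j * y i.level i.offset := by
  refine mul_left_cancel₀ (weightProd_ne_zero hw j) ?_
  rw [weightProd_mul_iterate_weightedShift, c0OfTendsto_apply, ← hi, blockCopies_position hC hC1 h]
  field_simp [weightProd_ne_zero hw]

lemma iterate_weightedShift_blockCopies_eq_zero (hw : ∀ n, w n ≠ 0) (hC : ∀ n, ‖w n‖ ≤ C)
    (hC1 : 1 ≤ C) (h : IsReturnFamily (fun n => ‖weightProd w n‖) (copyThreshold C d y) d E)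
    {n j : ℕ} (hnj : ¬∃ i : BlockIndex E d, i.position = n + j) :
    (⇑(weightedShift w ⟨C, hC⟩))^[n] (c0OfTendsto _ (tendsto_blockCopies hC hC1 h)) j = 0 := by
  refine mul_left_cancel₀ (weightProd_ne_zero hw j) ?_
  rw [weightProd_mul_iterate_weightedShift, c0OfTendsto_apply, blockCopies_eq_zero hnj, mul_zero,
    mul_zero]

lemma copyThreshold_le_norm_weightProd (hC : ∀ n, ‖w n‖ ≤ C) (hC1 : 1 ≤ C)
    (h : IsReturnFamily (fun n => ‖weightProd w n‖) (copyThreshold C d y) d E) {p n j : ℕ}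
    (hn : n ∈ E p) (hj : d p < j) {i : BlockIndex E d} (hi : i.position = n + j) :
    copyThreshold C d y (max p i.level) ≤ ‖weightProd w j‖ := by
  have hsum : i.start + i.offset = n + j := hi
  have hoff := i.offset_le
  have hne : (p, n) ≠ (i.level, i.start) := by
    intro heq
    obtain ⟨hp, hstart⟩ := Prod.mk.inj heq
    rw [← hp] at hoff
    omega
  have hle : n ≤ i.start := by
    by_contra! hlt
    have := h.lt_sub (fun _ _ hpr _ hk => norm_weightProd_lt_copyThreshold hC hC1 hpr hk)
      i.start_mem hn hlt.le hne.symm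
    omega
  obtain rfl : j = i.start - n + i.offset := by omega
  exact h.le_sub hn i.start_mem hle hne hoff

lemma norm_iterate_blockCopies_sub_le (hw : ∀ n, w n ≠ 0) (hC : ∀ n, ‖w n‖ ≤ C) (hC1 : 1 ≤ C)
    (hy : ∀ p t, d p < t → y p t = 0)
    (h : IsReturnFamily (fun n => ‖weightProd w n‖) (copyThreshold C d y) d E) {p n : ℕ}
    (hn : n ∈ E p) :
    ‖(⇑(weightedShift w ⟨C, hC⟩))^[n] (c0OfTendsto _ (tendsto_blockCopies hC hC1 h)) - y p‖ ≤
      (1 / 2) ^ p := by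
  refine norm_c0_le fun j => ?_
  rw [ZeroAtInftyContinuousMap.sub_apply]
  rcases le_or_gt j (d p) with hj | hj
  · rw [iterate_weightedShift_blockCopies hw hC hC1 h (i := ⟨p, n, j, hn, hj⟩) rfl,
      div_self (weightProd_ne_zero hw j), one_mul, sub_self, norm_zero]
    positivity
  rw [hy p j hj, sub_zero]
  by_cases hpos : ∃ i : BlockIndex E d, i.position = n + j
  · obtain ⟨i, hi⟩ := hpos
    rw [iterate_weightedShift_blockCopies hw hC hC1 h hi]
    exact (norm_weightProd_div_mul_le hC hC1 (le_max_right p _) i.offset_le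
      (copyThreshold_le_norm_weightProd hC hC1 h hn hj hi)).trans
        (pow_le_pow_of_le_one (by norm_num) (by norm_num) (le_max_left _ _))
  · rw [iterate_weightedShift_blockCopies_eq_zero hw hC hC1 h hpos, norm_zero]
    positivity

theorem exists_frequentlyHypercyclic_of_isReturnFamily [TopologicalSpace.SeparableSpace 𝕜]
    (hw : ∀ n, w n ≠ 0) (hbdd : ∃ C : ℝ, ∀ n, ‖w n‖ ≤ C)
    (h : ∀ (M : ℕ → ℝ) (d : ℕ → ℕ), ∃ E, IsReturnFamily (fun n => ‖weightProd w n‖) M d E) :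
    ∃ x : C₀(ℕ, 𝕜), ∀ U : Set C₀(ℕ, 𝕜), IsOpen U → U.Nonempty →
      0 < lowerDensity {n : ℕ | (⇑(weightedShift w hbdd))^[n] x ∈ U} := by
  obtain ⟨C, hC, hC1⟩ := exists_norm_le_and_one_le hbdd
  obtain ⟨d, z, hz⟩ := exists_frequently_c0Truncate_mem (E := 𝕜)
  set y := fun p => c0Truncate (d p) (z p)
  obtain ⟨E, hE⟩ := h (copyThreshold C d y) d
  have hy0 (p t : ℕ) (ht : d p < t) : y p t = 0 := c0Truncate_apply_of_le _ ht.le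
  refine ⟨c0OfTendsto _ (tendsto_blockCopies hC hC1 hE), fun U hU ⟨u, hu⟩ => ?_⟩
  obtain ⟨ε, hε, hball⟩ := Metric.isOpen_iff.1 hU u hu
  have hpow : ∀ᶠ p : ℕ in atTop, (1 / 2 : ℝ) ^ p < ε / 2 :=
    (tendsto_pow_atTop_nhds_zero_of_lt_one (by norm_num) (by norm_num)).eventually_lt_const
      (half_pos hε)
  have hfreq := hz _ Metric.isOpen_ball ⟨u, Metric.mem_ball_self (half_pos hε)⟩
  obtain ⟨p, hpu, hp⟩ := (hfreq.and_eventually hpow).exists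
  refine (hE.lowerDensity_pos p).trans_le (lowerDensity_mono fun n hn => hball ?_)
  have hcopy := norm_iterate_blockCopies_sub_le hw hC hC1 hy0 hE hn
  rw [← dist_eq_norm] at hcopy
  exact (dist_triangle _ (y p) _).trans_lt (by linarith [Metric.mem_ball.1 hpu])

end Criterion

section DistToRange

/-- The distance from `n` to the set of values of `a`. -/
noncomputable def distToRange (a : ℕ → ℕ) (n : ℕ) : ℕ :=
  ⨅ k, ((n : ℤ) - a k).natAbs

variable (a : ℕ → ℕ)

lemma distToRange_le (n k : ℕ) : distToRange a n ≤ ((n : ℤ) - a k).natAbs :=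
  ciInf_le (OrderBot.bddBelow _) k

lemma exists_natAbs_sub_eq_distToRange (n : ℕ) :
    ∃ k, ((n : ℤ) - a k).natAbs = distToRange a n :=
  Nat.sInf_mem (Set.range_nonempty _)

lemma distToRange_apply (k : ℕ) : distToRange a (a k) = 0 :=
  Nat.eq_zero_of_le_zero <| (distToRange_le a _ k).trans_eq (by simp)

lemma distToRange_add_le (n t : ℕ) : distToRange a (n + t) ≤ distToRange a n + t := by
  obtain ⟨k, hk⟩ := exists_natAbs_sub_eq_distToRange a n
  have := distToRange_le a (n + t) k
  omega

lemma distToRange_le_add (n t : ℕ) : distToRange a n ≤ distToRange a (n + t) + t := by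
  obtain ⟨k, hk⟩ := exists_natAbs_sub_eq_distToRange a (n + t)
  have := distToRange_le a n k
  omega

end DistToRange

section Repunit

/-- The base-four repunit `1⋯1` with `k` digits. -/
def repunit (k : ℕ) : ℕ :=
  ∑ i ∈ Finset.range k, 4 ^ i

@[simp]
lemma repunit_zero : repunit 0 = 0 :=
  Finset.sum_range_zero _

lemma three_mul_repunit_add_one (k : ℕ) : 3 * repunit k + 1 = 4 ^ k := by
  rw [mul_comm]
  exact geom_sum_mul_add 3 k

lemma repunit_strictMono : StrictMono repunit :=
  strictMono_nat_of_lt_succ fun k => by simp [repunit, Finset.sum_range_succ]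

lemma repunit_add (s i : ℕ) : repunit (s + i) = repunit s + 4 ^ s * repunit i := by
  simp only [repunit, Finset.sum_range_add, pow_add, Finset.mul_sum]

lemma repunit_modEq {s k : ℕ} (h : s ≤ k) : (repunit k : ℤ) ≡ repunit s [ZMOD (4 ^ s : ℕ)] := by
  obtain ⟨i, rfl⟩ := Nat.exists_eq_add_of_le h
  exact_mod_cast Int.natCast_modEq_iff.2 (by simp [repunit_add, Nat.ModEq])

end Repunit

section ReturnSets

/-- The exponents of the periods `4 ^ s_q` of the return sets: they grow fast enough for the
exceptional residues modulo `4 ^ s_{q+1}` to be rare among the multiples of `4 ^ s_q`. -/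
def periodExponent (L : ℕ → ℕ) : ℕ → ℕ
  | 0 => 6 * (L 0 + 1)
  | q + 1 => 6 * 2 ^ (q + 2) * 4 ^ periodExponent L q * (2 * L (q + 1) + 1)

/-- The period `4 ^ s_q` of the `q`-th return set before exceptional points are removed. -/
def period (L : ℕ → ℕ) (q : ℕ) : ℕ :=
  4 ^ periodExponent L q

variable (L : ℕ → ℕ)

lemma period_pos (q : ℕ) : 0 < period L q :=
  pow_pos four_pos _

lemma period_eq (q : ℕ) : period L q = 3 * repunit (periodExponent L q) + 1 :=
  (three_mul_repunit_add_one _).symm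

lemma periodExponent_lt_period (q : ℕ) : periodExponent L q < period L q :=
  Nat.lt_pow_self (by norm_num)

lemma period_le_periodExponent_succ (q : ℕ) : period L q ≤ periodExponent L (q + 1) := by
  change 4 ^ periodExponent L q ≤
    6 * 2 ^ (q + 2) * 4 ^ periodExponent L q * (2 * L (q + 1) + 1)
  rw [mul_right_comm]
  exact Nat.le_mul_of_pos_left _ (by positivity)

lemma period_monotone : Monotone (period L) :=
  monotone_nat_of_le_succ fun q =>
    (period_le_periodExponent_succ L q).trans (periodExponent_lt_period L _).le

lemma six_mul_lt_period (q : ℕ) : 6 * (L q + 1) < period L q := by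
  refine lt_of_le_of_lt ?_ (periodExponent_lt_period L q)
  cases q with
  | zero => exact le_rfl
  | succ q =>
    calc 6 * (L (q + 1) + 1) ≤ 6 * (2 * L (q + 1) + 1) := by omega
      _ ≤ 2 ^ (q + 2) * 4 ^ periodExponent L q * (6 * (2 * L (q + 1) + 1)) :=
          Nat.le_mul_of_pos_left _ (by positivity)
      _ = periodExponent L (q + 1) := by rw [periodExponent]; ring

lemma le_period_succ (q : ℕ) : 6 * 2 ^ (q + 2) * period L q * (2 * L (q + 1) + 1) *
    (periodExponent L (q + 1) + 1) ≤ period L (q + 1) := by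
  change periodExponent L (q + 1) * (periodExponent L (q + 1) + 1) ≤ 4 ^ periodExponent L (q + 1)
  generalize periodExponent L (q + 1) = s
  have hs : s < 2 ^ s := Nat.lt_two_pow_self
  calc s * (s + 1) ≤ 2 ^ s * 2 ^ s := Nat.mul_le_mul hs.le hs
    _ = 4 ^ s := (mul_pow 2 2 s).symm

/-- The points `n` which are, modulo the `q`-th period, within `L q` of plus or minus a repunit.
Only points beyond half the period count, so that the set is sparse in every initial segment. -/
def exceptionalSet (q : ℕ) : Set ℕ :=
  {n | period L q ≤ 2 * n ∧ ∃ (σ : ℤˣ) (k : ℕ) (u : ℤ),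
    |u| ≤ L q ∧ (n : ℤ) ≡ σ * repunit k + u [ZMOD period L q]}

lemma countUpTo_exceptionalSet_le (q N : ℕ) : countUpTo (exceptionalSet L q) N ≤
    2 * ((periodExponent L q + 1) * (2 * L q + 1)) * (N / period L q + 1) := by
  set T : Finset ℤ := (Finset.univ ×ˢ Finset.range (periodExponent L q + 1) ×ˢ
    Finset.Icc (-(L q : ℤ)) (L q)).image fun z : ℤˣ × ℕ × ℤ => z.1 * repunit z.2.1 + z.2.2
  have hcard : T.card ≤ 2 * ((periodExponent L q + 1) * (2 * L q + 1)) := by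
    refine Finset.card_image_le.trans_eq ?_
    rw [Finset.card_product, Finset.card_product, Finset.card_univ, Fintype.card_units_int,
      Finset.card_range, Int.card_Icc]
    congr 2
    omega
  have hsub : exceptionalSet L q ⊆ {n | ∃ c ∈ T, (n : ℤ) ≡ c [ZMOD period L q]} := by
    rintro n ⟨-, σ, k, u, hu, hmod⟩
    obtain ⟨j, hj, hkj⟩ : ∃ j ≤ periodExponent L q,
        (repunit k : ℤ) ≡ repunit j [ZMOD period L q] :=
      (le_total k (periodExponent L q)).elim (fun h => ⟨k, h, rfl⟩)
        fun h => ⟨_, le_rfl, repunit_modEq h⟩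
    refine ⟨σ * repunit j + u, ?_, hmod.trans ((hkj.mul_left _).add_right u)⟩
    exact Finset.mem_image.2 ⟨(σ, j, u), Finset.mem_product.2 ⟨Finset.mem_univ _,
      Finset.mem_product.2 ⟨Finset.mem_range.2 (Nat.lt_succ_of_le hj),
        Finset.mem_Icc.2 (abs_le.1 hu)⟩⟩, rfl⟩
  calc countUpTo (exceptionalSet L q) N ≤ T.card * (N / period L q + 1) :=
        (countUpTo_mono hsub N).trans (countUpTo_residues_le _ T N)
    _ ≤ _ := Nat.mul_le_mul_right _ hcard

lemma countUpTo_exceptionalSet_eq_zero {q N : ℕ} (h : 2 * N < period L q) :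
    countUpTo (exceptionalSet L q) N = 0 := by
  rw [countUpTo, Finset.card_eq_zero, Finset.filter_eq_empty_iff]
  rintro n hn ⟨hle, -⟩
  rw [Finset.mem_range] at hn
  omega

lemma countUpTo_exceptionalSet_succ_mul_le (q N : ℕ) :
    countUpTo (exceptionalSet L (q + 1)) N * (2 ^ (q + 2) * period L q) ≤ N := by
  rcases lt_or_ge (2 * N) (period L (q + 1)) with h | h
  · simp [countUpTo_exceptionalSet_eq_zero L h]
  have hdiv : period L (q + 1) * (N / period L (q + 1)) ≤ N := Nat.mul_div_le _ _
  refine Nat.le_of_mul_le_mul_left (?_ : 3 * _ ≤ 3 * N) three_pos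
  calc 3 * (countUpTo (exceptionalSet L (q + 1)) N * (2 ^ (q + 2) * period L q))
      ≤ 3 * (2 * ((periodExponent L (q + 1) + 1) * (2 * L (q + 1) + 1)) *
          (N / period L (q + 1) + 1) * (2 ^ (q + 2) * period L q)) := by
        gcongr
        exact countUpTo_exceptionalSet_le L (q + 1) N
    _ = 6 * 2 ^ (q + 2) * period L q * (2 * L (q + 1) + 1) * (periodExponent L (q + 1) + 1) *
          (N / period L (q + 1) + 1) := by ring
    _ ≤ period L (q + 1) * (N / period L (q + 1) + 1) :=
        Nat.mul_le_mul_right _ (le_period_succ L q)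
    _ ≤ 3 * N := by linarith

/-- The times at which the `p`-th vector is copied. -/
def returnSet (p : ℕ) : Set ℕ :=
  {n | 0 < n ∧ period L p ∣ n} \ ⋃ i, exceptionalSet L (p + i + 1)

variable {L}

lemma notMem_exceptionalSet {p q n : ℕ} (hn : n ∈ returnSet L p) (hpq : p < q) :
    n ∉ exceptionalSet L q := fun hq =>
  hn.2 <| Set.mem_iUnion.2 ⟨q - p - 1, by rwa [show p + (q - p - 1) + 1 = q by omega]⟩

lemma lowerDensity_returnSet_pos (p : ℕ) : 0 < lowerDensity (returnSet L p) := by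
  have hP : (0 : ℝ) < period L p := Nat.cast_pos.2 (period_pos L p)
  set a : ℝ := (period L p : ℝ)⁻¹ / 2 with ha
  have hcount (i N : ℕ) : (countUpTo (exceptionalSet L (p + i + 1)) N : ℝ) ≤
      a / 2 / 2 ^ i * ((N : ℝ) + 1) := by
    have hmul : countUpTo (exceptionalSet L (p + i + 1)) N * (2 ^ (i + 2) * period L p) ≤ N := by
      refine le_trans ?_ (countUpTo_exceptionalSet_succ_mul_le L (p + i) N)
      gcongr
      · exact one_le_two
      · exact Nat.le_add_left i p
      · exact period_monotone L (Nat.le_add_right p i)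
    calc (countUpTo (exceptionalSet L (p + i + 1)) N : ℝ)
        = countUpTo (exceptionalSet L (p + i + 1)) N * (2 ^ (i + 2) * period L p) *
          (a / 2 / 2 ^ i) := by rw [ha]; field_simp; ring
      _ ≤ (N + 1) * (a / 2 / 2 ^ i) := by
          gcongr
          exact_mod_cast hmul.trans N.le_succ
      _ = a / 2 / 2 ^ i * ((N : ℝ) + 1) := mul_comm _ _
  refine lt_of_lt_of_le ?_ (lowerDensity_sub_tsum_le_lowerDensity_diff {n | 0 < n ∧ period L p ∣ n}
    (summable_geometric_two' a) hcount)
  rw [tsum_geometric_two', lowerDensity_pos_multiples, ha, sub_half]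
  positivity

lemma lt_distToRange_sub_of_dvd {q n m : ℕ} (hm : 0 < m) (hdvd : period L q ∣ m)
    (hn : 2 * n < period L q) : L q < distToRange repunit (m - n) := by
  by_contra! hle
  obtain ⟨k, hk⟩ := exists_natAbs_sub_eq_distToRange repunit (m - n)
  have hP := period_eq L q
  have hL := six_mul_lt_period L q
  have hPm : period L q ≤ m := Nat.le_of_dvd hm hdvd
  rcases le_total k (periodExponent L q) with hks | hks
  · have := repunit_strictMono.monotone hks
    omega
  · have hz : (period L q : ℤ) ∣ m - (repunit k - repunit (periodExponent L q)) :=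
      dvd_sub (Int.natCast_dvd_natCast.2 hdvd) (repunit_modEq hks).symm.dvd
    have := Int.le_of_dvd (by omega) hz
    omega

lemma lt_distToRange_of_notMem_exceptionalSet {q n x : ℕ} (hn : n ∉ exceptionalSet L q)
    (hle : period L q ≤ 2 * n) (σ : ℤˣ) (hx : (n : ℤ) ≡ σ * x [ZMOD period L q]) :
    L q < distToRange repunit x := by
  by_contra! hdist
  obtain ⟨k, hk⟩ := exists_natAbs_sub_eq_distToRange repunit x
  refine hn ⟨hle, σ, k, σ * (x - repunit k), ?_, ?_⟩
  · rw [abs_mul, Int.isUnit_iff_abs_eq.1 σ.isUnit, one_mul, Int.abs_eq_natAbs, hk]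
    exact_mod_cast hdist
  · rwa [← mul_add, add_sub_cancel]

lemma lt_distToRange_sub {p q n m : ℕ} (hn : n ∈ returnSet L p) (hm : m ∈ returnSet L q)
    (hnm : n ≤ m) (hne : (p, n) ≠ (q, m)) :
    L (max p q) < distToRange repunit (m - n) := by
  have hndvd : (n : ℤ) ≡ 0 [ZMOD period L p] :=
    Int.modEq_zero_iff_dvd.2 (Int.natCast_dvd_natCast.2 hn.1.2)
  have hmdvd : (m : ℤ) ≡ 0 [ZMOD period L q] :=
    Int.modEq_zero_iff_dvd.2 (Int.natCast_dvd_natCast.2 hm.1.2)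
  rcases lt_trichotomy p q with hpq | rfl | hqp
  · rw [max_eq_right hpq.le]
    rcases lt_or_ge (2 * n) (period L q) with hsmall | hlarge
    · exact lt_distToRange_sub_of_dvd hm.1.1 hm.1.2 hsmall
    · refine lt_distToRange_of_notMem_exceptionalSet (notMem_exceptionalSet hn hpq) hlarge (-1) ?_
      push_cast [hnm]
      simpa using (hmdvd.sub_left (n : ℤ)).symm
  · rw [max_self]
    have hlt : n < m := hnm.lt_of_ne fun h => hne (by rw [h])
    exact lt_distToRange_sub_of_dvd (n := 0) (Nat.sub_pos_of_lt hlt) (Nat.dvd_sub hm.1.2 hn.1.2)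
      (by simpa using period_pos L p)
  · rw [max_eq_left hqp.le]
    refine lt_distToRange_of_notMem_exceptionalSet (notMem_exceptionalSet hm hqp) ?_ 1 ?_
    · have := Nat.le_of_dvd hn.1.1 hn.1.2
      omega
    · push_cast [hnm]
      simpa using (hndvd.sub_left (m : ℤ)).symm

open scoped Pointwise in
theorem exists_isReturnFamily_distToRange_repunit (L d : ℕ → ℕ) :
    ∃ E, IsReturnFamily (distToRange repunit) L d E := by
  set L' : ℕ → ℕ := fun p => L p + ∑ q ∈ Finset.range (p + 1), d q + p
  have hL' {p r : ℕ} (hpr : p ≤ r) : L r + d p + r ≤ L' r := by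
    have : d p ≤ ∑ q ∈ Finset.range (r + 1), d q :=
      Finset.single_le_sum (fun _ _ => Nat.zero_le _) (Finset.mem_range.2 (Nat.lt_succ_of_le hpr))
    simp only [L']
    omega
  refine ⟨returnSet L', lowerDensity_returnSet_pos, ?_, fun p => ?_, ?_⟩
  · rintro p _ ⟨n, hn, t, ht, rfl⟩
    have hfar : L' p < distToRange repunit n :=
      lt_distToRange_sub_of_dvd (n := 0) hn.1.1 hn.1.2 (by simpa using period_pos L' p)
    have := distToRange_le_add repunit n t
    have := hL' (le_refl p)
    simp only [Set.mem_Iic] at ht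
    change _ ≤ distToRange repunit (n + t)
    omega
  · refine tendsto_atTop.2 fun b => eventually_inf_principal.2 ?_
    set q := p + 1 + b
    filter_upwards [eventually_ge_atTop (period L' q + d p)]
    rintro _ hi ⟨n, hn, t, ht, rfl⟩
    simp only [Set.mem_Iic] at ht hi ⊢
    have hfar : L' q < distToRange repunit n :=
      lt_distToRange_of_notMem_exceptionalSet (notMem_exceptionalSet hn (by omega)) (by omega) 1
        (by simp)
    have := distToRange_le_add repunit n t
    have := hL' (show p ≤ q by omega)
    omega
  · intro p q n m t hn hm hnm hne ht
    have := lt_distToRange_sub hn hm hnm hne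
    have := distToRange_le_add repunit (m - n) t
    have := hL' (le_max_right p q)
    omega

end ReturnSets

section RepunitWeights

variable {𝕜 : Type*} [NormedField 𝕜]

/-- The weights `w_i = b ^ (D_i - D_{i-1})`, where `D_i` is the distance from `i` to the set of
repunits, so that `w_1 ⋯ w_n = b ^ D_n`. -/
noncomputable def repunitWeight (b : 𝕜) (i : ℕ) : 𝕜 :=
  b ^ distToRange repunit i / b ^ distToRange repunit (i - 1)

variable {b : 𝕜}

lemma repunitWeight_ne_zero (hb : b ≠ 0) (i : ℕ) : repunitWeight b i ≠ 0 :=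
  div_ne_zero (pow_ne_zero _ hb) (pow_ne_zero _ hb)

lemma weightProd_repunitWeight (hb : b ≠ 0) (n : ℕ) :
    weightProd (repunitWeight b) n = b ^ distToRange repunit n := by
  have hzero : distToRange repunit 0 = 0 := by simpa using distToRange_apply repunit 0
  refine (weightProd_div (f := fun i => b ^ distToRange repunit i)
    (fun _ => pow_ne_zero _ hb) n).trans ?_
  rw [hzero, pow_zero, div_one]

lemma norm_repunitWeight_le (hb : 1 ≤ ‖b‖) (i : ℕ) : ‖repunitWeight b i‖ ≤ ‖b‖ := by
  have hpos : 0 < ‖b‖ := one_pos.trans_le hb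
  have hstep : distToRange repunit i ≤ distToRange repunit (i - 1) + 1 := by
    rcases i.eq_zero_or_pos with rfl | hi
    · exact Nat.le_succ _
    · simpa only [Nat.sub_add_cancel hi] using distToRange_add_le repunit (i - 1) 1
  rw [repunitWeight, norm_div, norm_pow, norm_pow, div_le_iff₀ (pow_pos hpos _), ← pow_succ']
  exact pow_le_pow_right₀ hb hstep

lemma exists_isReturnFamily_norm_weightProd_repunitWeight (hb : 1 < ‖b‖) (M : ℕ → ℝ)
    (d : ℕ → ℕ) :
    ∃ E, IsReturnFamily (fun n => ‖weightProd (repunitWeight b) n‖) M d E := by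
  choose L hL using fun p => pow_unbounded_of_one_lt (M p) hb
  obtain ⟨E, hE⟩ := exists_isReturnFamily_distToRange_repunit L d
  have hb0 : b ≠ 0 := norm_pos_iff.1 (one_pos.trans hb)
  simp only [weightProd_repunitWeight hb0, norm_pow]
  exact ⟨E, hE.comp (pow_right_mono₀ hb.le) (tendsto_pow_atTop_atTop_of_one_lt hb)
    fun p => (hL p).le⟩

lemma not_dense_periodicPts_weightedShift_repunitWeight (hb : b ≠ 0)
    (hbdd : ∃ C : ℝ, ∀ n, ‖repunitWeight b n‖ ≤ C) :
    ¬Dense (Function.periodicPts (weightedShift (repunitWeight b) hbdd)) := fun hdense => by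
  refine not_tendsto_const_atTop (1 : ℝ) atTop <|
    ((tendsto_norm_weightProd_of_dense_periodicPts hbdd hdense).comp
      repunit_strictMono.tendsto_atTop).congr fun k => ?_
  rw [Function.comp_apply, weightProd_repunitWeight hb, distToRange_apply, pow_zero, norm_one]

end RepunitWeights

theorem exists_weightedShift_frequentlyHC_not_chaotic_general {𝕜 : Type*}
    [NontriviallyNormedField 𝕜] [TopologicalSpace.SeparableSpace 𝕜] :
    ∃ (w : ℕ → 𝕜) (Bw : C₀(ℕ, 𝕜) →L[𝕜] C₀(ℕ, 𝕜)),
      (∀ n, w n ≠ 0) ∧ (∃ C : ℝ, ∀ n, ‖w n‖ ≤ C) ∧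
      (∀ (x : C₀(ℕ, 𝕜)) (n : ℕ), Bw x n = w (n + 1) * x (n + 1)) ∧
      (∃ x : C₀(ℕ, 𝕜), ∀ U : Set C₀(ℕ, 𝕜), IsOpen U → U.Nonempty →
        0 < lowerDensity {n : ℕ | (⇑Bw)^[n] x ∈ U}) ∧
      ¬ ((∃ x : C₀(ℕ, 𝕜), Dense (Set.range fun n : ℕ => (⇑Bw)^[n] x)) ∧
          Dense {x : C₀(ℕ, 𝕜) | ∃ n : ℕ, 0 < n ∧ (⇑Bw)^[n] x = x}) := by
  obtain ⟨b, hb⟩ := NormedField.exists_one_lt_norm 𝕜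
  have hb0 : b ≠ 0 := norm_pos_iff.1 (one_pos.trans hb)
  have hne := repunitWeight_ne_zero hb0
  have hbdd : ∃ C : ℝ, ∀ n, ‖repunitWeight b n‖ ≤ C := ⟨‖b‖, norm_repunitWeight_le hb.le⟩
  refine ⟨repunitWeight b, weightedShift _ hbdd, hne, hbdd, weightedShift_apply _ hbdd, ?_, ?_⟩
  · exact exists_frequentlyHypercyclic_of_isReturnFamily hne hbdd
      (exists_isReturnFamily_norm_weightProd_repunitWeight hb)
  · exact fun hchaotic => not_dense_periodicPts_weightedShift_repunitWeight hb0 hbdd hchaotic.2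

/-- There exists a bounded sequence `w` of nonzero scalars such that the weighted backward
shift `B_w` on `c₀` (the continuous linear operator `Bw` with `(Bw x) n = w (n+1) * x (n+1)`)
is frequently hypercyclic but not chaotic (chaotic = hypercyclic with a dense set of
periodic points). -/
theorem exists_weightedShift_frequentlyHC_not_chaotic {𝕜 : Type*} [RCLike 𝕜] :
    ∃ (w : ℕ → 𝕜) (Bw : C₀(ℕ, 𝕜) →L[𝕜] C₀(ℕ, 𝕜)),
      (∀ n, w n ≠ 0) ∧ (∃ C : ℝ, ∀ n, ‖w n‖ ≤ C) ∧
      (∀ (x : C₀(ℕ, 𝕜)) (n : ℕ), Bw x n = w (n + 1) * x (n + 1)) ∧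
      (∃ x : C₀(ℕ, 𝕜), ∀ U : Set C₀(ℕ, 𝕜), IsOpen U → U.Nonempty →
        0 < lowerDensity {n : ℕ | (⇑Bw)^[n] x ∈ U}) ∧
      ¬ ((∃ x : C₀(ℕ, 𝕜), Dense (Set.range fun n : ℕ => (⇑Bw)^[n] x)) ∧
          Dense {x : C₀(ℕ, 𝕜) | ∃ n : ℕ, 0 < n ∧ (⇑Bw)^[n] x = x}) := by
  exact exists_weightedShift_frequentlyHC_not_chaotic_general
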